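/- Let Ω ⊆ ℝ² be open and connected, let ν > 0 and λ ∈ ℝ, let ψ : ℝ² → ℝ be smooth on Ω, set u = (∂₂ψ, −∂₁ψ), assume Δu + λu = 0 on Ω (componentwise), and let c ∈ ℝ be such that Δψ + λψ = c on Ω. Define v(x,t) = e^{−νλt} u(x) and p(x,t) = −e^{−2νλt} ( |u(x)|²/2 + λψ(x)²/2 − c ψ(x) ). Then for every (x,t) ∈ Ω × (0,∞): ∂ₜv + (v·∇)v = ν Δₓv − ∇ₓp (componentwise) and divₓ v = ∂₁v₁ + ∂₂v₂ = 0. -/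

import Mathlib

/-!
With `F(t) = e^{-νλt}`, every field is separated: `v = F(t) u(x)` and `p = -F(t)² q(x)` with
`q = |u|²/2 + λψ²/2 - cψ`. The viscous term and the time derivative cancel because `Δu = -λu`.
What remains is the stationary identity `(u·∇)u = ∇q` on `Ω`: writing `u = (∂₂ψ, -∂₁ψ)`, the
difference of the two sides is `(Δψ + λψ - c)∇ψ` up to sign, which vanishes by hypothesis.
Incompressibility is the symmetry `∂₁∂₂ψ = ∂₂∂₁ψ`.
-/

open MeasureTheory

/-- First partial derivative (with respect to the first coordinate of `ℝ × ℝ`). -/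
noncomputable def pd1 (f : ℝ × ℝ → ℝ) : ℝ × ℝ → ℝ := fun x => fderiv ℝ f x (1, 0)

/-- Second partial derivative (with respect to the second coordinate of `ℝ × ℝ`). -/
noncomputable def pd2 (f : ℝ × ℝ → ℝ) : ℝ × ℝ → ℝ := fun x => fderiv ℝ f x (0, 1)

/-- The Laplacian on `ℝ × ℝ`. -/
noncomputable def lap (f : ℝ × ℝ → ℝ) : ℝ × ℝ → ℝ := fun x => pd1 (pd1 f) x + pd2 (pd2 f) x

/-- First spatial partial derivative of a time-dependent function on `(ℝ × ℝ) × ℝ`. -/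
noncomputable def pdx1 (f : (ℝ × ℝ) × ℝ → ℝ) : (ℝ × ℝ) × ℝ → ℝ :=
  fun z => fderiv ℝ (fun y => f (y, z.2)) z.1 (1, 0)

/-- Second spatial partial derivative of a time-dependent function on `(ℝ × ℝ) × ℝ`. -/
noncomputable def pdx2 (f : (ℝ × ℝ) × ℝ → ℝ) : (ℝ × ℝ) × ℝ → ℝ :=
  fun z => fderiv ℝ (fun y => f (y, z.2)) z.1 (0, 1)

/-- Time derivative of a time-dependent function on `(ℝ × ℝ) × ℝ`. -/
noncomputable def pdt (f : (ℝ × ℝ) × ℝ → ℝ) : (ℝ × ℝ) × ℝ → ℝ :=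
  fun z => deriv (fun s => f (z.1, s)) z.2

/-- Spatial Laplacian of a time-dependent function on `(ℝ × ℝ) × ℝ`. -/
noncomputable def lapx (f : (ℝ × ℝ) × ℝ → ℝ) : (ℝ × ℝ) × ℝ → ℝ :=
  fun z => pdx1 (pdx1 f) z + pdx2 (pdx2 f) z

theorem pdx1_separated (E : ℝ → ℝ) (g : ℝ × ℝ → ℝ) :
    pdx1 (fun w => E w.2 * g w.1) = fun w => E w.2 * pd1 g w.1 := by
  funext z
  have h := congrFun (fderiv_const_smul_field (𝕜 := ℝ) (f := g) (E z.2)) z.1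
  exact congrArg (fun L : ℝ × ℝ →L[ℝ] ℝ => L (1, 0)) h

theorem pdx2_separated (E : ℝ → ℝ) (g : ℝ × ℝ → ℝ) :
    pdx2 (fun w => E w.2 * g w.1) = fun w => E w.2 * pd2 g w.1 := by
  funext z
  have h := congrFun (fderiv_const_smul_field (𝕜 := ℝ) (f := g) (E z.2)) z.1
  exact congrArg (fun L : ℝ × ℝ →L[ℝ] ℝ => L (0, 1)) h

theorem lapx_separated (E : ℝ → ℝ) (g : ℝ × ℝ → ℝ) (z : (ℝ × ℝ) × ℝ) :
    lapx (fun w => E w.2 * g w.1) z = E z.2 * lap g z.1 := by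
  simp only [lapx, lap, pdx1_separated, pdx2_separated]
  ring

theorem pdt_exp_mul (k : ℝ) (g : ℝ × ℝ → ℝ) (z : (ℝ × ℝ) × ℝ) :
    pdt (fun w => Real.exp (-(k * w.2)) * g w.1) z =
      -k * (Real.exp (-(k * z.2)) * g z.1) := by
  have h : HasDerivAt (fun s : ℝ => Real.exp (-(k * s)) * g z.1)
      (Real.exp (-(k * z.2)) * (-(k * 1)) * g z.1) z.2 :=
    (((hasDerivAt_id z.2).const_mul k).neg.exp).mul_const _
  simp only [pdt]
  rw [h.deriv]
  ring

theorem pd1_neg (g : ℝ × ℝ → ℝ) (x : ℝ × ℝ) : pd1 (fun y => -g y) x = -pd1 g x := by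
  simp [pd1, fderiv_fun_neg]

theorem pd2_neg (g : ℝ × ℝ → ℝ) (x : ℝ × ℝ) : pd2 (fun y => -g y) x = -pd2 g x := by
  simp [pd2, fderiv_fun_neg]

theorem differentiableAt_fderiv_apply {f : ℝ × ℝ → ℝ} {x : ℝ × ℝ} (hf : ContDiffAt ℝ 2 f x)
    (e : ℝ × ℝ) : DifferentiableAt ℝ (fun y => fderiv ℝ f y e) x := by
  have h : ContDiffAt ℝ 1 (fderiv ℝ f) x := hf.fderiv_right (by norm_num)
  exact (h.differentiableAt one_ne_zero).clm_apply (differentiableAt_const e)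

theorem pd1_pd2_comm {f : ℝ × ℝ → ℝ} {x : ℝ × ℝ} (hf : ContDiffAt ℝ 2 f x) :
    pd1 (pd2 f) x = pd2 (pd1 f) x := by
  have h : ContDiffAt ℝ 1 (fderiv ℝ f) x := hf.fderiv_right (by norm_num)
  have hd := h.differentiableAt one_ne_zero
  have key : ∀ e e' : ℝ × ℝ,
      fderiv ℝ (fun y => fderiv ℝ f y e) x e' = fderiv ℝ (fderiv ℝ f) x e' e := by
    intro e e'
    rw [fderiv_clm_apply hd (differentiableAt_const e)]
    simp
  have hs : IsSymmSndFDerivAt ℝ f x := hf.isSymmSndFDerivAt (by simp)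
  change fderiv ℝ (fun y => fderiv ℝ f y (0, 1)) x (1, 0) =
    fderiv ℝ (fun y => fderiv ℝ f y (1, 0)) x (0, 1)
  rw [key, key]
  exact hs _ _

/-- Directional derivative of the function `q = |u|²/2 + λψ²/2 - cψ` occurring in the pressure,
with `a`, `b` the components of `u`. -/
theorem fderiv_pressure {a b f : ℝ × ℝ → ℝ} {x : ℝ × ℝ} (ha : DifferentiableAt ℝ a x)
    (hb : DifferentiableAt ℝ b x) (hf : DifferentiableAt ℝ f x) (lam c : ℝ) (e : ℝ × ℝ) :
    fderiv ℝ (fun y => (a y ^ 2 + b y ^ 2) / 2 + lam * f y ^ 2 / 2 - c * f y) x e =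
      a x * fderiv ℝ a x e + b x * fderiv ℝ b x e + lam * f x * fderiv ℝ f x e
        - c * fderiv ℝ f x e := by
  have h := ((((ha.hasFDerivAt.pow 2).add (hb.hasFDerivAt.pow 2)).mul_const (2⁻¹ : ℝ)).add
    (((hf.hasFDerivAt.pow 2).const_mul lam).mul_const (2⁻¹ : ℝ))).sub (hf.hasFDerivAt.const_mul c)
  have h' : fderiv ℝ (fun y => (a y ^ 2 + b y ^ 2) / 2 + lam * f y ^ 2 / 2 - c * f y) x = _ :=
    h.fderiv
  rw [h']
  simp
  ring

theorem stmt12 (Ω : Set (ℝ × ℝ)) (hΩ : IsOpen Ω) (hconn : IsConnected Ω)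
    (ν lam : ℝ) (hν : 0 < ν)
    (ψ : ℝ × ℝ → ℝ) (hψ : ContDiffOn ℝ (⊤ : ℕ∞) ψ Ω)
    (u : ℝ × ℝ → ℝ × ℝ) (hu : u = fun x => (pd2 ψ x, - pd1 ψ x))
    (heq : ∀ x ∈ Ω,
      lap (fun y => (u y).1) x + lam * (u x).1 = 0 ∧
      lap (fun y => (u y).2) x + lam * (u x).2 = 0)
    (c : ℝ) (hc : ∀ x ∈ Ω, lap ψ x + lam * ψ x = c)
    (v : (ℝ × ℝ) × ℝ → ℝ × ℝ)
    (hv : v = fun z => Real.exp (-(ν * lam * z.2)) • u z.1)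
    (p : (ℝ × ℝ) × ℝ → ℝ)
    (hp : p = fun z => - Real.exp (-(2 * ν * lam * z.2)) *
      (((u z.1).1 ^ 2 + (u z.1).2 ^ 2) / 2 + lam * (ψ z.1) ^ 2 / 2 - c * ψ z.1)) :
    ∀ z ∈ Ω ×ˢ Set.Ioi (0 : ℝ),
      (pdt (fun w => (v w).1) z +
          ((v z).1 * pdx1 (fun w => (v w).1) z + (v z).2 * pdx2 (fun w => (v w).1) z) =
        ν * lapx (fun w => (v w).1) z - pdx1 p z) ∧
      (pdt (fun w => (v w).2) z +
          ((v z).1 * pdx1 (fun w => (v w).2) z + (v z).2 * pdx2 (fun w => (v w).2) z) =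
        ν * lapx (fun w => (v w).2) z - pdx2 p z) ∧
      pdx1 (fun w => (v w).1) z + pdx2 (fun w => (v w).2) z = 0 := by
  rintro ⟨x, t⟩ ⟨hx, -⟩
  have hψx : ContDiffAt ℝ 2 ψ x :=
    ((hψ x hx).contDiffAt (hΩ.mem_nhds hx)).of_le (WithTop.coe_le_coe.2 (le_top : (2 : ℕ∞) ≤ ⊤))
  have d0 : DifferentiableAt ℝ ψ x := hψx.differentiableAt two_ne_zero
  have d1 : DifferentiableAt ℝ (pd1 ψ) x := differentiableAt_fderiv_apply hψx _
  have d2 : DifferentiableAt ℝ (pd2 ψ) x := differentiableAt_fderiv_apply hψx _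
  have hsymm := pd1_pd2_comm hψx
  obtain ⟨e1, e2⟩ := heq x hx
  have hcx := hc x hx
  subst hu hv hp
  simp only [Prod.smul_fst, Prod.smul_snd, smul_eq_mul] at e1 e2 ⊢
  set q : ℝ × ℝ → ℝ := fun y =>
    ((pd2 ψ y) ^ 2 + (-pd1 ψ y) ^ 2) / 2 + lam * (ψ y) ^ 2 / 2 - c * ψ y with hq
  have q1 : pd1 q x = pd2 ψ x * pd1 (pd2 ψ) x + (-pd1 ψ x) * pd1 (fun y => -pd1 ψ y) x
      + lam * ψ x * pd1 ψ x - c * pd1 ψ x := fderiv_pressure d2 d1.fun_neg d0 lam c _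
  have q2 : pd2 q x = pd2 ψ x * pd2 (pd2 ψ) x + (-pd1 ψ x) * pd2 (fun y => -pd1 ψ y) x
      + lam * ψ x * pd2 ψ x - c * pd2 ψ x := fderiv_pressure d2 d1.fun_neg d0 lam c _
  have p1 := congrFun (pdx1_separated (fun s => -Real.exp (-(2 * ν * lam * s))) q) (x, t)
  have p2 := congrFun (pdx2_separated (fun s => -Real.exp (-(2 * ν * lam * s))) q) (x, t)
  have v1 := fun g => congrFun (pdx1_separated (fun s => Real.exp (-(ν * lam * s))) g) (x, t)
  have v2 := fun g => congrFun (pdx2_separated (fun s => Real.exp (-(ν * lam * s))) g) (x, t)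
  have vl := fun g => lapx_separated (fun s => Real.exp (-(ν * lam * s))) g (x, t)
  have vt := fun g => pdt_exp_mul (ν * lam) g (x, t)
  have hE : Real.exp (-(2 * ν * lam * t)) = Real.exp (-(ν * lam * t)) ^ 2 := by
    rw [← Real.exp_nat_mul]
    congr 1
    push_cast
    ring
  simp only [hq] at p1 p2
  have w1 := v1 (pd2 ψ)
  have w2 := v2 (pd2 ψ)
  have w3 := v1 (fun y => -pd1 ψ y)
  have w4 := v2 (fun y => -pd1 ψ y)
  have l1 := vl (pd2 ψ)
  have l2 := vl (fun y => -pd1 ψ y)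
  have t1 := vt (pd2 ψ)
  have t2 := vt (fun y => -pd1 ψ y)
  simp only [] at w1 w2 w3 w4 l1 l2 t1 t2
  rw [p1, p2, w1, w2, w3, w4, l1, l2, t1, t2, ← hq, q1, q2, pd1_neg, pd2_neg, hE]
  simp only [lap] at hcx
  generalize Real.exp (-(ν * lam * t)) = E
  refine ⟨?_, ?_, ?_⟩
  · linear_combination (-ν * E) * e1 - E ^ 2 * pd1 ψ x * hcx
  · linear_combination (-ν * E) * e2 - E ^ 2 * pd2 ψ x * hcx
  · linear_combination E * hsymm
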